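/- Let n : (0,ε₀) → ℕ satisfy n(ε)/log(1/ε) → ∞ as ε↓0, let a : (0,ε₀) → (0,∞) satisfy a(ε) → ∞ as ε↓0, and set m(ε) = ⌊min(n(ε)/2, a(ε)·log(1/ε))⌋. Suppose each P_k(ε), 1 ≤ k ≤ n(ε), is stochastic, P̃ is an irreducible and aperiodic stochastic matrix with stationary distribution π̃, and sup_{0 ≤ k ≤ m(ε)} ‖P_{n(ε)−k}(ε) − (P̃ − ε k P̃⁽¹⁾)‖ = O(ε² m(ε)²) as ε↓0. Then for every probability row vector μ and column vector r, μ P_1(ε)P_2(ε)⋯P_{n(ε)}(ε) r = π̃ r − ε π̃ P̃⁽¹⁾ (I − P̃ + Π̃)^{−2} P̃ r + O(ε² m(ε)³) as ε↓0. -/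

import Mathlib

open Matrix Topology Filter

/-- The matrix norm ‖A‖ = max_x Σ_y |A(x,y)|. -/
noncomputable def matNorm {T : Type*} [Fintype T] (A : Matrix T T ℝ) : ℝ :=
  ⨆ x, ∑ y, |A x y|

/-- A square matrix is stochastic if all entries are nonnegative and every row sums to 1. -/
def IsStochastic {T : Type*} [Fintype T] (P : Matrix T T ℝ) : Prop :=
  (∀ x y, 0 ≤ P x y) ∧ ∀ x, ∑ y, P x y = 1

/-- The ordered product P 1 * P 2 * ⋯ * P j. -/
noncomputable def prodP {T : Type*} [Fintype T] [DecidableEq T]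
    (P : ℕ → Matrix T T ℝ) (j : ℕ) : Matrix T T ℝ :=
  ((List.range j).map fun i => P (i + 1)).prod

/-- m(ε) = ⌊min(n(ε)/2, a(ε)·log(1/ε))⌋. -/
noncomputable def mcut (n : ℝ → ℕ) (a : ℝ → ℝ) (ε : ℝ) : ℕ :=
  ⌊min ((n ε : ℝ) / 2) (a ε * Real.log (1/ε))⌋₊

section Core

set_option linter.unusedSectionVars false

variable {R : Type*} [NormedRing R] [NormOneClass R] [NormedAlgebra ℝ R]

theorem core_rec (A : R) (X F : ℕ → R) (m : ℕ) (h0 : X 0 = 0)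
    (hs : ∀ k < m, X (k+1) = A * X k + F k) :
    ∀ k ≤ m, X k = ∑ j ∈ Finset.range k, A^(k-1-j) * F j := by
  intro k
  induction k with
  | zero => intro _; simp [h0]
  | succ k ih =>
    intro hk
    rw [hs k (by omega), ih (by omega), Finset.sum_range_succ, Finset.mul_sum]
    congr 1
    · refine Finset.sum_congr rfl fun j hj => ?_
      have := Finset.mem_range.1 hj
      rw [← mul_assoc, ← pow_succ']
      congr 2
      omega
    · simp

theorem geom_bd (ρ : ℝ) (h0 : 0 < ρ) (h1 : ρ < 1) (k : ℕ) :
    ∑ j ∈ Finset.range k, 4 * ρ^j ≤ 4 / (1-ρ) := by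
  rw [← Finset.mul_sum, div_eq_mul_inv]
  refine mul_le_mul_of_nonneg_left ?_ (by norm_num)
  have h := mul_neg_geom_sum ρ k
  have hp : 0 ≤ ρ ^ k := by positivity
  have h3 : 0 < 1 - ρ := by linarith
  rw [← one_div, le_div_iff₀ h3, mul_comm, h]
  linarith

theorem geom_bd' (ρ : ℝ) (h0 : 0 < ρ) (h1 : ρ < 1) (k : ℕ) :
    ∑ j ∈ Finset.range k, 4 * ρ^(k-1-j) ≤ 4 / (1-ρ) := by
  rw [Finset.sum_range_reflect (fun j => 4 * ρ^j) k]
  exact geom_bd ρ h0 h1 k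

theorem arith_geom (A Z : R) (hZ : Z * (1 - A) = 1) (m : ℕ) :
    ∑ k ∈ Finset.range m, (k:ℝ) • A^k
      = Z^2 * A - Z^2 * ((m:ℝ) • A^m - ((m:ℝ)-1) • A^(m+1)) := by
  have h2 : Z^2 * (1-A)^2 = 1 := by
    rw [pow_two, pow_two, mul_assoc, ← mul_assoc Z (1-A), hZ, one_mul, hZ]
  have h3 : (1-A)^2 * ∑ k ∈ Finset.range m, (k:ℝ) • A^k
      = A - ((m:ℝ) • A^m - ((m:ℝ)-1) • A^(m+1)) := by
    induction m with
    | zero => simp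
    | succ m ih =>
      rw [Finset.sum_range_succ, mul_add, ih]
      have : (1-A)^2 * ((m:ℝ) • A^m) = (m:ℝ) • (A^m - (2:ℝ) • A^(m+1) + A^(m+2)) := by
        rw [mul_smul_comm]
        congr 1
        rw [two_smul, show A^(m+2) = A*(A*A^m) by rw [pow_succ', pow_succ'], pow_succ' A m]
        noncomm_ring
      rw [this]
      push_cast
      module
  calc _ = (Z^2 * (1-A)^2) * ∑ k ∈ Finset.range m, (k:ℝ) • A^k := by rw [h2, one_mul]
    _ = _ := by rw [mul_assoc, h3, mul_sub]

theorem core (T E T1 Z : R) (ρ : ℝ) (h0 : 0 < ρ) (h1 : ρ < 1)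
    (hTE : T * E = E) (hET : E * T = E) (hEE : E * E = E) (hE : ‖E‖ ≤ 1)
    (hA : ∀ k, ‖(T - E)^k‖ ≤ 4 * ρ^k) (hZ : Z * (1 - (T - E)) = 1) (hT1 : T1 * E = 0)
    (m : ℕ) (hm : 1 ≤ m) (Q V : ℕ → R) (G : R) (ε d e : ℝ) (hε : 0 ≤ ε) (hd0 : 0 ≤ d) (he0 : 0 ≤ e)
    (hG : ‖G‖ ≤ 1) (hGE : G * E = E)
    (hQ : ∀ k < m, ‖Q k‖ ≤ 1) (hQE : ∀ k < m, Q k * E = E)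
    (he : ∀ k < m, ‖Q k - (T - (ε * k) • T1)‖ ≤ e)
    (hd : ∀ k < m, ‖Q k - T‖ ≤ d)
    (hV0 : V 0 = 1) (hV : ∀ k < m, V (k+1) = Q k * V k) :
    ‖G * V m - (E - ε • (E * T1 * Z^2 * T))‖ ≤
      8 * (4/(1-ρ))^2 * d^2 + 32 * m * d * ρ^(m-1) + 8 * ρ^m + 4 * (4/(1-ρ)) * m * d^2
       + (4/(1-ρ)) * e + ε * (‖T1‖ * ‖Z‖^2 * (2 * m * (4 * ρ^m))) := by
  set A := T - E with hAdef
  set K := 4/(1-ρ) with hK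
  have hK0 : 0 ≤ K := div_nonneg (by norm_num) (by linarith)
  have hAE : A * E = 0 := by rw [hAdef, sub_mul, hTE, hEE, sub_self]
  have hEA : E * A = 0 := by rw [hAdef, mul_sub, hET, hEE, sub_self]
  have h1E : ‖1 - E‖ ≤ 2 := by
    calc _ ≤ ‖(1:R)‖ + ‖E‖ := norm_sub_le _ _
      _ ≤ 2 := by rw [norm_one]; linarith
  have hVn : ∀ k ≤ m, ‖V k‖ ≤ 1 := by
    intro k
    induction k with
    | zero => intro _; rw [hV0, norm_one]
    | succ k ih =>
      intro hk
      rw [hV k (by omega)]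
      exact (norm_mul_le _ _).trans (mul_le_one₀ (hQ k (by omega)) (norm_nonneg _) (ih (by omega)))
  let D : ℕ → R := fun k => Q k - T
  have hDE : ∀ k < m, D k * E = 0 := fun k hk => by
    simp only [D]; rw [sub_mul, hQE k hk, hTE, sub_self]
  let W : ℕ → R := fun k => (1 - E) * V k
  have hWn : ∀ k ≤ m, ‖W k‖ ≤ 2 := fun k hk => by
    calc _ ≤ ‖1 - E‖ * ‖V k‖ := norm_mul_le _ _
      _ ≤ 2 * 1 := mul_le_mul h1E (hVn k hk) (norm_nonneg _) (by norm_num)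
      _ = 2 := by norm_num
  have hDW : ∀ k < m, D k * W k = D k * V k := fun k hk => by
    simp only [W]
    rw [← mul_assoc, mul_sub, hDE k hk, mul_one, sub_zero]
  have hAW : ∀ k, A * W k = A * V k := fun k => by
    simp only [W]
    rw [← mul_assoc, mul_sub, hAE, mul_one, sub_zero]
  have hQD : ∀ k, Q k = T + D k := fun k => by simp [D]
  let X : ℕ → R := fun k => W k - (1 - E) * A^k
  have hX0 : X 0 = 0 := by simp [X, W, hV0]
  have hXs : ∀ k < m, X (k+1) = A * X k + (1 - E) * (D k * W k) := fun k hk => by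
    have e1 : W (k+1) = A * W k + (1 - E) * (D k * W k) := by
      rw [hDW k hk, hAW]
      simp only [W]
      rw [hV k hk, hQD k, add_mul, mul_add, ← mul_assoc (1 - E) T, sub_mul 1 E T, hET, one_mul]
    have e2 : A * ((1 - E) * A^k) = (1 - E) * A^(k+1) := by
      rw [pow_succ', ← mul_assoc, ← mul_assoc, mul_sub, sub_mul 1 E A, hAE, hEA]
      simp
    simp only [X]
    rw [e1, mul_sub, e2]; abel
  have hXf := core_rec A X (fun k => (1 - E) * (D k * W k)) m hX0 hXs
  have hXn : ∀ k ≤ m, ‖X k‖ ≤ K * (4 * d) := fun k hk => by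
    rw [hXf k hk]
    refine (norm_sum_le _ _).trans ?_
    calc _ ≤ ∑ j ∈ Finset.range k, (4 * ρ^(k-1-j)) * (4*d) := by
            refine Finset.sum_le_sum fun j hj => ?_
            have hj := Finset.mem_range.1 hj
            refine (norm_mul_le _ _).trans (mul_le_mul (hA _) ?_ (norm_nonneg _) (by positivity))
            calc _ ≤ ‖1 - E‖ * ‖D j * W j‖ := norm_mul_le _ _
              _ ≤ 2 * (‖D j‖ * ‖W j‖) := mul_le_mul h1E (norm_mul_le _ _) (norm_nonneg _) (by norm_num)
              _ ≤ 2 * (d * 2) := by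
                have := mul_le_mul (hd j (by omega)) (hWn j (by omega)) (norm_nonneg _) hd0
                simp only [D] at *
                linarith
              _ = 4 * d := by ring
      _ ≤ _ := by
        rw [← Finset.sum_mul]
        exact mul_le_mul_of_nonneg_right (geom_bd' ρ h0 h1 k) (by positivity)
  have hDWX : ∀ k < m, D k * W k = D k * X k + D k * A^k := fun k hk => by
    have : D k * ((1 - E) * A^k) = D k * A^k := by
      rw [← mul_assoc, mul_sub, hDE k hk, mul_one, sub_zero]
    simp only [X]
    rw [mul_sub, this]; abel
  have hDX : ∀ k < m, ‖D k * X k‖ ≤ d * (K * (4*d)) := fun k hk =>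
    (norm_mul_le _ _).trans (mul_le_mul (hd k hk) (hXn k hk.le) (norm_nonneg _) hd0)
  have hDA : ∀ k < m, ‖D k * A^k‖ ≤ d * (4 * ρ^k) := fun k hk =>
    (norm_mul_le _ _).trans (mul_le_mul (hd k hk) (hA k) (norm_nonneg _) hd0)
  -- bound on X m
  have hXm : ‖X m‖ ≤ 8 * K^2 * d^2 + 32 * m * d * ρ^(m-1) := by
    rw [hXf m le_rfl]
    refine (norm_sum_le _ _).trans ?_
    calc _ ≤ ∑ j ∈ Finset.range m, ((4 * ρ^(m-1-j)) * (8*K*d^2) + 32 * d * ρ^(m-1)) := by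
            refine Finset.sum_le_sum fun j hj => ?_
            have hj := Finset.mem_range.1 hj
            have hp : ρ^(m-1) = ρ^(m-1-j) * ρ^j := by
              rw [← pow_add]; congr 1; omega
            calc _ ≤ ‖A^(m-1-j)‖ * (‖1-E‖ * ‖D j * W j‖) :=
                  (norm_mul_le _ _).trans (mul_le_mul_of_nonneg_left (norm_mul_le _ _) (norm_nonneg _))
              _ ≤ (4 * ρ^(m-1-j)) * (2 * (d * (K * (4*d)) + d * (4 * ρ^j))) := by
                  refine mul_le_mul (hA _) (mul_le_mul h1E ?_ (norm_nonneg _) (by norm_num))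
                    (by positivity) (by positivity)
                  rw [hDWX j hj]
                  exact (norm_add_le _ _).trans (add_le_add (hDX j hj) (hDA j hj))
              _ = _ := by rw [hp]; ring
      _ ≤ _ := by
        rw [Finset.sum_add_distrib, ← Finset.sum_mul]
        have := mul_le_mul_of_nonneg_right (geom_bd' ρ h0 h1 m) (show 0 ≤ 8*K*d^2 by positivity)
        simp only [Finset.sum_const, Finset.card_range, nsmul_eq_mul]
        rw [← hK] at this
        nlinarith
  have hWm : ‖W m‖ ≤ 8 * K^2 * d^2 + 32 * m * d * ρ^(m-1) + 8 * ρ^m := by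
    have : W m = X m + (1 - E) * A^m := by simp [X]
    rw [this]
    refine (norm_add_le _ _).trans (add_le_add hXm ?_)
    calc _ ≤ ‖1-E‖ * ‖A^m‖ := norm_mul_le _ _
      _ ≤ 2 * (4 * ρ^m) := mul_le_mul h1E (hA m) (norm_nonneg _) (by norm_num)
      _ = _ := by ring
  -- the projected part
  have hY : ∀ k ≤ m, E * V k = E + ∑ j ∈ Finset.range k, E * (D j * W j) := by
    intro k
    induction k with
    | zero => intro _; simp [hV0]
    | succ k ih =>
      intro hk
      rw [Finset.sum_range_succ, ← add_assoc, ← ih (by omega), hV k (by omega), hQD k,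
        hDW k (by omega), add_mul, mul_add, ← mul_assoc E T, hET]
  have hsplit : ∀ j < m, E * (D j * W j) = E * (D j * X j)
      + E * ((Q j - (T - (ε * j) • T1)) * A^j) - ε • (E * (T1 * ((j:ℝ) • A^j))) := fun j hj => by
    have : D j = (Q j - (T - (ε * j) • T1)) - (ε * j) • T1 := by simp only [D]; abel
    rw [hDWX j hj, mul_add, add_sub_assoc]
    congr 1
    conv_lhs => rw [this]
    rw [sub_mul, mul_sub]
    congr 1
    rw [smul_mul_assoc, mul_smul_comm, mul_smul, mul_smul_comm, mul_smul_comm]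
  have hZE : Z * E = E := by
    have : (1 - A) * E = E := by rw [sub_mul, hAE, one_mul, sub_zero]
    conv_lhs => rw [← this, ← mul_assoc, hZ, one_mul]
  have hmain : T1 * (Z^2 * A) = T1 * Z^2 * T := by
    rw [hAdef, mul_sub, mul_sub, pow_two, mul_assoc Z Z E, hZE, hZE, hT1, sub_zero, mul_assoc, mul_assoc, mul_assoc]
  set B := (m:ℝ) • A^m - ((m:ℝ)-1) • A^(m+1) with hB
  have hBn : ‖B‖ ≤ 2 * m * (4 * ρ^m) := by
    have hm' : (1:ℝ) ≤ m := by exact_mod_cast hm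
    have hp : ρ^(m+1) ≤ ρ^m := pow_le_pow_of_le_one h0.le h1.le (by omega)
    calc _ ≤ ‖(m:ℝ) • A^m‖ + ‖((m:ℝ)-1) • A^(m+1)‖ := norm_sub_le _ _
      _ = m * ‖A^m‖ + (m-1) * ‖A^(m+1)‖ := by
        rw [norm_smul, norm_smul, Real.norm_of_nonneg (by linarith), Real.norm_of_nonneg (by linarith)]
      _ ≤ m * (4 * ρ^m) + m * (4 * ρ^m) := by
        refine add_le_add (mul_le_mul_of_nonneg_left (hA m) (by linarith)) ?_
        refine mul_le_mul (by linarith) ((hA _).trans (by linarith)) (norm_nonneg _) (by linarith)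
      _ = _ := by ring
  have hid : G * V m - (E - ε • (E * T1 * Z^2 * T)) = G * W m
      + ∑ j ∈ Finset.range m, E * (D j * X j)
      + ∑ j ∈ Finset.range m, E * ((Q j - (T - (ε * j) • T1)) * A^j)
      + ε • (E * (T1 * (Z^2 * B))) := by
    have e1 : G * V m = G * W m + E * V m := by
      simp only [W]; rw [sub_mul, one_mul, mul_sub, ← mul_assoc G E, hGE]; abel
    have e2 : ∑ j ∈ Finset.range m, E * (D j * W j) = ∑ j ∈ Finset.range m, E * (D j * X j)
      + ∑ j ∈ Finset.range m, E * ((Q j - (T - (ε * j) • T1)) * A^j)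
      - ε • (E * (T1 * (Z^2 * A - Z^2 * B))) := by
      rw [hB, ← arith_geom A Z hZ m, Finset.mul_sum, Finset.mul_sum, Finset.smul_sum,
        ← Finset.sum_add_distrib, ← Finset.sum_sub_distrib]
      exact Finset.sum_congr rfl fun j hj => hsplit j (Finset.mem_range.1 hj)
    have e3 : E * T1 * Z^2 * T = E * (T1 * (Z^2 * A)) := by
      rw [hmain]; simp only [mul_assoc]
    rw [e1, hY m le_rfl, e2, e3, mul_sub, mul_sub, smul_sub]
    abel
  rw [hid]
  have hEn : ∀ x : R, ‖E * x‖ ≤ ‖x‖ := fun x =>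
    (norm_mul_le _ _).trans (mul_le_of_le_one_left (norm_nonneg _) hE)
  have b1 : ‖G * W m‖ ≤ 8 * K^2 * d^2 + 32 * m * d * ρ^(m-1) + 8 * ρ^m :=
    ((norm_mul_le _ _).trans (mul_le_of_le_one_left (norm_nonneg _) hG)).trans hWm
  have b2 : ‖∑ j ∈ Finset.range m, E * (D j * X j)‖ ≤ 4 * K * m * d^2 := by
    refine (norm_sum_le _ _).trans ?_
    calc _ ≤ ∑ j ∈ Finset.range m, d * (K * (4*d)) := Finset.sum_le_sum fun j hj =>
            (hEn _).trans (hDX j (Finset.mem_range.1 hj))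
      _ = _ := by simp; ring
  have b3 : ‖∑ j ∈ Finset.range m, E * ((Q j - (T - (ε * j) • T1)) * A^j)‖ ≤ K * e := by
    refine (norm_sum_le _ _).trans ?_
    calc _ ≤ ∑ j ∈ Finset.range m, (4 * ρ^j) * e := Finset.sum_le_sum fun j hj => by
            refine (hEn _).trans ((norm_mul_le _ _).trans ?_)
            rw [mul_comm]
            exact mul_le_mul (hA j) (he j (Finset.mem_range.1 hj)) (norm_nonneg _) (by positivity)
      _ ≤ _ := by
        rw [← Finset.sum_mul]
        exact mul_le_mul_of_nonneg_right (geom_bd ρ h0 h1 m) he0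
  have b4 : ‖ε • (E * (T1 * (Z^2 * B)))‖ ≤ ε * (‖T1‖ * ‖Z‖^2 * (2 * m * (4 * ρ^m))) := by
    rw [norm_smul, Real.norm_of_nonneg hε]
    refine mul_le_mul_of_nonneg_left ((hEn _).trans ?_) hε
    rw [mul_assoc ‖T1‖]
    refine (norm_mul_le _ _).trans (mul_le_mul_of_nonneg_left ?_ (norm_nonneg _))
    exact (norm_mul_le _ _).trans (mul_le_mul (norm_pow_le _ _) hBn (norm_nonneg _) (by positivity))
  refine (norm_add_le _ _).trans (add_le_add ?_ b4)
  refine (norm_add_le _ _).trans (add_le_add ?_ b3)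
  exact (norm_add_le _ _).trans (add_le_add b1 b2)

end Core

section Mat

set_option linter.unusedSectionVars false

attribute [local instance] Matrix.linftyOpNormedRing Matrix.linftyOpNormedAlgebra

variable {S : Type*} [Fintype S] [DecidableEq S]

theorem norm_eq_matNorm [Nonempty S] (A : Matrix S S ℝ) : ‖A‖ = matNorm A := by
  rw [Matrix.linfty_opNorm_def, Finset.sup_univ_eq_ciSup, matNorm, NNReal.coe_iSup]
  simp

theorem norm_le_of_rows [Nonempty S] (A : Matrix S S ℝ) (c : ℝ) (h : ∀ x, ∑ y, |A x y| ≤ c) : ‖A‖ ≤ c := by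
  rw [norm_eq_matNorm, matNorm]
  exact ciSup_le h

theorem IsStochastic.norm_le [Nonempty S] {Q : Matrix S S ℝ} (h : IsStochastic Q) : ‖Q‖ ≤ 1 := by
  refine norm_le_of_rows _ _ fun x => ?_
  rw [← h.2 x]
  exact (Finset.sum_congr rfl fun y _ => abs_of_nonneg (h.1 x y)).le

theorem IsStochastic.mulm {Q Q' : Matrix S S ℝ} (h : IsStochastic Q) (h' : IsStochastic Q') :
    IsStochastic (Q * Q') := by
  constructor
  · intro x y
    rw [Matrix.mul_apply]
    exact Finset.sum_nonneg fun z _ => mul_nonneg (h.1 _ _) (h'.1 _ _)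
  · intro x
    simp_rw [Matrix.mul_apply]
    rw [Finset.sum_comm]
    simp_rw [← Finset.mul_sum, h'.2, mul_one, h.2]

theorem isStochastic_one : IsStochastic (1 : Matrix S S ℝ) := by
  constructor
  · intro x y
    rw [Matrix.one_apply]; split_ifs <;> norm_num
  · intro x; simp [Matrix.one_apply]

theorem IsStochastic.powm {Q : Matrix S S ℝ} (h : IsStochastic Q) (k : ℕ) : IsStochastic (Q^k) := by
  induction k with
  | zero => simpa using isStochastic_one
  | succ k ih => rw [pow_succ]; exact ih.mulm h

theorem IsStochastic.mulE {Q : Matrix S S ℝ} (h : IsStochastic Q) (π : S → ℝ) :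
    Q * (Matrix.of fun _ y => π y) = Matrix.of fun _ y => π y := by
  ext x y
  simp [Matrix.mul_apply, ← Finset.sum_mul, h.2]

theorem E_mul {Q : Matrix S S ℝ} (π : S → ℝ) (h : π ᵥ* Q = π) :
    (Matrix.of fun (_:S) y => π y) * Q = Matrix.of fun _ y => π y := by
  ext x y
  have := congrFun h y
  simpa [Matrix.mul_apply, Matrix.vecMul, dotProduct] using this

theorem sub_pow_proj {R : Type*} [Ring R] (T E : R) (hTE : T * E = E) (hET : E * T = E)
    (hEE : E * E = E) (k : ℕ) : (T - E)^(k+1) = T^(k+1) - E := by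
  induction k with
  | zero => simp
  | succ k ih =>
    have : T^(k+1) * E = E := by
      clear ih
      induction k with
      | zero => simpa using hTE
      | succ k ih => rw [pow_succ, mul_assoc, hTE, ih]
    rw [pow_succ, ih, sub_mul, mul_sub, mul_sub, this, hEE, hET, pow_succ T (k+1)]
    abel

theorem ergodic [Nonempty S] (Pt : Matrix S S ℝ) (hPt : IsStochastic Pt)
    (hirr : ∃ N : ℕ, ∀ x y, 0 < (Pt ^ N) x y)
    (π : S → ℝ) (hπ0 : ∀ x, 0 ≤ π x) (hπ1 : ∑ x, π x = 1) (hπP : π ᵥ* Pt = π) :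
    ∃ ρ : ℝ, 0 < ρ ∧ ρ < 1 ∧ ∀ k, ‖(Pt - Matrix.of fun _ y => π y)^k‖ ≤ 4 * ρ^k := by
  obtain ⟨N, hN⟩ := hirr
  set E : Matrix S S ℝ := Matrix.of fun _ y => π y with hE
  have hEs : IsStochastic E := ⟨fun x y => hπ0 y, fun x => hπ1⟩
  have hTE : Pt * E = E := hPt.mulE π
  have hET : E * Pt = E := E_mul π hπP
  have hEE : E * E = E := hEs.mulE π
  have hB : IsStochastic (Pt^(N+1)) := hPt.powm _
  have hBpos : ∀ x y, 0 < (Pt^(N+1)) x y := by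
    intro x y
    rw [pow_succ', Matrix.mul_apply]
    have h1 := hPt.2 x
    obtain ⟨z, hz⟩ : ∃ z, Pt x z ≠ 0 := by
      by_contra! hc
      simp [hc] at h1
    refine Finset.sum_pos' (fun z _ => mul_nonneg (hPt.1 _ _) (hN _ _).le) ⟨z, Finset.mem_univ _, ?_⟩
    exact mul_pos (lt_of_le_of_ne (hPt.1 _ _) hz.symm) (hN _ _)
  have hEB : E * Pt^(N+1) = E := by
    have : ∀ k, E * Pt^k = E := by
      intro k
      induction k with
      | zero => simp
      | succ k ih => rw [pow_succ, ← mul_assoc, ih, hET]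
    exact this _
  set B := Pt^(N+1) with hBdef
  obtain ⟨δ, hδ0, hδ1, hδ⟩ : ∃ δ : ℝ, 0 < δ ∧ δ < 1 ∧ ∀ x y, δ ≤ B x y := by
    obtain ⟨p, hp⟩ := Finite.exists_min (fun p : S × S => B p.1 p.2)
    refine ⟨min (B p.1 p.2) (1/2), lt_min (hBpos _ _) (by norm_num), ?_, fun x y => ?_⟩
    · exact (min_le_right _ _).trans_lt (by norm_num)
    · exact (min_le_left _ _).trans (hp (x, y))
  have h1δ : 0 < 1 - δ := by linarith
  have hπle : ∀ y, π y ≤ 1 := fun y => by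
    rw [← hπ1]; exact Finset.single_le_sum (fun i _ => hπ0 i) (Finset.mem_univ y)
  set R := (1-δ)⁻¹ • (B - δ • E) with hR
  have hRs : IsStochastic R := by
    constructor
    · intro x y
      have h1 : δ * π y ≤ B x y := by nlinarith [hδ x y, hπle y]
      have : R x y = (1-δ)⁻¹ * (B x y - δ * π y) := by simp [hR, hE]
      rw [this]
      exact mul_nonneg (inv_nonneg.2 h1δ.le) (by linarith)
    · intro x
      have : ∀ y, R x y = (1-δ)⁻¹ * (B x y - δ * π y) := fun y => by simp [hR, hE]
      simp_rw [this]
      rw [← Finset.mul_sum, Finset.sum_sub_distrib, ← Finset.mul_sum, hB.2, hπ1, mul_one]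
      exact inv_mul_cancel₀ h1δ.ne'
  have hRE : R * E = E := hRs.mulE π
  have hER : E * R = E := by
    rw [hR, mul_smul_comm, mul_sub, hEB, mul_smul_comm, hEE]
    have : E - δ • E = (1-δ) • E := by module
    rw [this, smul_smul, inv_mul_cancel₀ h1δ.ne', one_smul]
  have hBE : B - E = (1-δ) • (R - E) := by
    rw [hR, smul_sub, smul_smul, mul_inv_cancel₀ h1δ.ne']
    module
  have hstE : ∀ Q : Matrix S S ℝ, IsStochastic Q → ‖Q - E‖ ≤ 2 := fun Q hQ => by
    have := norm_sub_le Q E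
    linarith [hQ.norm_le, hEs.norm_le]
  have hA2 : ∀ k, ‖(Pt - E)^k‖ ≤ 2 := by
    intro k
    rcases k with _ | k
    · rw [pow_zero]; linarith [(isStochastic_one (S := S)).norm_le]
    · rw [sub_pow_proj _ _ hTE hET hEE]
      exact hstE _ (hPt.powm _)
  obtain ⟨j, hj⟩ := exists_pow_lt_of_lt_one (show (0:ℝ) < 1/4 by norm_num) (show 1 - δ < 1 by linarith)
  set L := (N+1)*(j+1) with hL
  have hLpos : 0 < L := by positivity
  have hAL : ‖(Pt - E)^L‖ ≤ 1/2 := by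
    rw [hL, pow_mul, sub_pow_proj _ _ hTE hET hEE, ← hBdef, hBE, smul_pow,
      sub_pow_proj _ _ hRE hER hEE, norm_smul, Real.norm_of_nonneg (by positivity)]
    have h1 := hstE _ (hRs.powm (j+1))
    have h2 : (1-δ)^(j+1) ≤ 1/4 := by
      refine le_trans ?_ hj.le
      exact pow_le_pow_of_le_one h1δ.le (by linarith) (by omega)
    have h3 : 0 ≤ (1-δ)^(j+1) := by positivity
    calc _ ≤ (1/4:ℝ) * 2 := mul_le_mul h2 h1 (norm_nonneg _) (by norm_num)
      _ = _ := by norm_num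
  clear_value L
  have hρL : ((1/2:ℝ)^((1:ℝ)/L))^L = 1/2 := by
    rw [← Real.rpow_natCast, ← Real.rpow_mul (by norm_num), one_div_mul_cancel (by positivity), Real.rpow_one]
  refine ⟨(1/2:ℝ)^((1:ℝ)/L), by positivity, ?_, ?_⟩
  · exact Real.rpow_lt_one (by norm_num) (by norm_num) (by positivity)
  · set ρ := (1/2:ℝ)^((1:ℝ)/L) with hρ
    have hρ0 : 0 < ρ := by positivity
    have hρ1 : ρ < 1 := Real.rpow_lt_one (by norm_num) (by norm_num) (by positivity)
    intro k
    obtain ⟨q, s, hs, rfl⟩ : ∃ q s, s < L ∧ k = L * q + s :=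
      ⟨k / L, k % L, Nat.mod_lt _ hLpos, (Nat.div_add_mod k L).symm⟩
    rw [pow_add, pow_mul, pow_add, pow_mul, hρL]
    have h1 : (1/2:ℝ) ≤ ρ^s := by
      rw [← hρL]; exact pow_le_pow_of_le_one hρ0.le hρ1.le hs.le
    have h2 : ‖((Pt - E)^L)^q‖ ≤ (1/2:ℝ)^q := by
      haveI : NormOneClass (Matrix S S ℝ) := Matrix.linfty_opNormOneClass
      exact (norm_pow_le _ _).trans (pow_le_pow_left₀ (norm_nonneg _) hAL q)
    have h3 : (0:ℝ) < (1/2)^q := by positivity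
    calc _ ≤ ‖((Pt - E)^L)^q‖ * ‖(Pt - E)^s‖ := norm_mul_le _ _
      _ ≤ (1/2:ℝ)^q * 2 := mul_le_mul h2 (hA2 s) (norm_nonneg _) h3.le
      _ ≤ _ := by nlinarith

theorem inv_spec (A : Matrix S S ℝ) (ρ : ℝ) (h0 : 0 < ρ) (h1 : ρ < 1)
    (hA : ∀ k, ‖A^k‖ ≤ 4 * ρ^k) : (1 - A)⁻¹ * (1 - A) = 1 := by
  obtain ⟨L, hL⟩ := exists_pow_lt_of_lt_one (show (0:ℝ) < 1/4 by norm_num) h1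
  have h2 : ‖A^L‖ < 1 := by linarith [hA L]
  have h3 : IsUnit (1 - A^L) := isUnit_one_sub_of_norm_lt_one h2
  rw [← mul_neg_geom_sum, Matrix.isUnit_iff_isUnit_det, Matrix.det_mul] at h3
  exact Matrix.nonsing_inv_mul _ (isUnit_of_mul_isUnit_left h3)

theorem dot_bound (M : Matrix S S ℝ) (μ r : S → ℝ) (hμ0 : ∀ x, 0 ≤ μ x) (hμ1 : ∑ x, μ x = 1) :
    |μ ⬝ᵥ (M *ᵥ r)| ≤ ‖M‖ * ‖r‖ := by
  have h := Matrix.linfty_opNorm_mulVec M r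
  calc _ ≤ ∑ x, |μ x * (M *ᵥ r) x| := Finset.abs_sum_le_sum_abs _ _
    _ ≤ ∑ x, μ x * (‖M‖ * ‖r‖) := Finset.sum_le_sum fun x _ => by
        rw [abs_mul, abs_of_nonneg (hμ0 x)]
        exact mul_le_mul_of_nonneg_left ((norm_le_pi_norm (M *ᵥ r) x).trans h) (hμ0 x)
    _ = _ := by rw [← Finset.sum_mul, hμ1, one_mul]

theorem dot_E (π μ r : S → ℝ) (hμ1 : ∑ x, μ x = 1) (M : Matrix S S ℝ) :
    μ ⬝ᵥ (((Matrix.of fun (_:S) y => π y) * M) *ᵥ r) = π ⬝ᵥ (M *ᵥ r) := by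
  rw [← Matrix.mulVec_mulVec]
  have : ((Matrix.of fun (_:S) y => π y) *ᵥ (M *ᵥ r)) = fun _ => π ⬝ᵥ (M *ᵥ r) := by
    ext x; simp [Matrix.mulVec, dotProduct]
  rw [this, dotProduct, ← Finset.sum_mul, hμ1, one_mul]

/-- backwards partial products -/
noncomputable def backProd (Q : ℕ → Matrix S S ℝ) : ℕ → Matrix S S ℝ
  | 0 => 1
  | k+1 => Q k * backProd Q k

theorem prodP_succ (P : ℕ → Matrix S S ℝ) (j : ℕ) : prodP P (j+1) = prodP P j * P (j+1) := by
  simp [prodP, List.range_succ]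

theorem prodP_split (P : ℕ → Matrix S S ℝ) (n k : ℕ) (hk : k ≤ n) :
    prodP P n = prodP P (n-k) * backProd (fun i => P (n-i)) k := by
  induction k with
  | zero => simp [backProd]
  | succ k ih =>
    rw [ih (by omega)]
    obtain ⟨j, hj⟩ : ∃ j, n - k = j + 1 := ⟨n-k-1, by omega⟩
    have : n - (k+1) = j := by omega
    simp only [backProd]
    rw [this, hj, prodP_succ, mul_assoc]

theorem prodP_stoch (P : ℕ → Matrix S S ℝ) (n : ℕ) (h : ∀ k, 1 ≤ k → k ≤ n → IsStochastic (P k)) (j : ℕ)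
    (hj : j ≤ n) : IsStochastic (prodP P j) := by
  induction j with
  | zero => simpa [prodP] using isStochastic_one
  | succ j ih => rw [prodP_succ]; exact (ih (by omega)).mulm (h _ (by omega) hj)

theorem mcut_asymp (n : ℝ → ℕ) (a : ℝ → ℝ)
    (hn : Tendsto (fun ε => (n ε : ℝ) / Real.log (1/ε)) (𝓝[>] (0:ℝ)) atTop)
    (ha : Tendsto a (𝓝[>] (0:ℝ)) atTop) (ρ : ℝ) (h0 : 0 < ρ) (h1 : ρ < 1) :
    ∃ ε₁ > (0:ℝ), ∀ ε : ℝ, 0 < ε → ε < ε₁ →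
      1 ≤ mcut n a ε ∧ 2 * mcut n a ε ≤ n ε ∧ ρ^(mcut n a ε) ≤ ε^2 := by
  have hl : Tendsto (fun ε : ℝ => Real.log (1/ε)) (𝓝[>] (0:ℝ)) atTop := by
    simp_rw [one_div]
    exact Real.tendsto_log_atTop.comp tendsto_inv_nhdsGT_zero
  have hlρ : 0 < - Real.log ρ := by linarith [Real.log_neg h0 h1]
  set K : ℝ := 2 / (- Real.log ρ) + 2 with hK
  have hK2 : 2 ≤ K := by
    have : 0 < 2 / (- Real.log ρ) := by positivity
    linarith
  have ev : ∀ᶠ ε in 𝓝[>] (0:ℝ), 1 ≤ mcut n a ε ∧ 2 * mcut n a ε ≤ n ε ∧ ρ^(mcut n a ε) ≤ ε^2 := by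
    filter_upwards [hl.eventually_ge_atTop 1, hn.eventually_ge_atTop (2*K),
      ha.eventually_ge_atTop K, self_mem_nhdsWithin] with ε hL hnε haε hε
    have hε : 0 < ε := hε
    set l := Real.log (1/ε) with hldef
    have hl0 : 0 < l := by linarith
    rw [le_div_iff₀ hl0] at hnε
    have hmin : K * l ≤ min ((n ε : ℝ)/2) (a ε * l) :=
      le_min (by linarith) (mul_le_mul_of_nonneg_right haε hl0.le)
    have hKl : 2 ≤ K * l := by nlinarith
    have hfl : K * l - 1 ≤ (mcut n a ε : ℝ) := by
      have := Nat.lt_floor_add_one (min ((n ε : ℝ)/2) (a ε * l))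
      rw [mcut]; linarith
    refine ⟨?_, ?_, ?_⟩
    · have : (1:ℝ) ≤ (mcut n a ε : ℝ) := by linarith
      exact_mod_cast this
    · have h3 : (mcut n a ε : ℝ) ≤ min ((n ε : ℝ)/2) (a ε * l) :=
        Nat.floor_le (by linarith)
      have h4 : (2 * mcut n a ε : ℝ) ≤ n ε := by linarith [min_le_left ((n ε : ℝ)/2) (a ε * l)]
      exact_mod_cast h4
    · rw [← Real.log_le_log_iff (by positivity) (by positivity), Real.log_pow, Real.log_pow]
      have hle : Real.log ε = - l := by rw [hldef, one_div, Real.log_inv, neg_neg]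
      rw [hle]
      have h5 : 2 / (- Real.log ρ) * l ≤ (mcut n a ε : ℝ) := by
        rw [hK] at hfl; nlinarith
      have h6 := mul_le_mul_of_nonneg_right h5 hlρ.le
      have h7 : 2 / (- Real.log ρ) * l * (- Real.log ρ) = 2 * l := by
        rw [div_mul_eq_mul_div, div_mul_cancel₀ _ hlρ.ne']
      rw [h7] at h6
      push_cast
      linarith
  rw [eventually_nhdsWithin_iff, Metric.eventually_nhds_iff] at ev
  obtain ⟨ε₁, h, hh⟩ := ev
  refine ⟨ε₁, h, fun ε h2 h3 => hh ?_ h2⟩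
  rw [Real.dist_eq, sub_zero, abs_of_pos h2]; exact h3

theorem norm_expansion [Nonempty S]
    (ε₀ : ℝ) (hε₀ : 0 < ε₀) (n : ℝ → ℕ) (a : ℝ → ℝ)
    (hn : Tendsto (fun ε => (n ε : ℝ) / Real.log (1/ε)) (𝓝[>] (0:ℝ)) atTop)
    (ha : Tendsto a (𝓝[>] (0:ℝ)) atTop)
    (P : ℕ → ℝ → Matrix S S ℝ) (Pt Pt1 : Matrix S S ℝ)
    (hstoch : ∀ ε : ℝ, 0 < ε → ε < ε₀ → ∀ k : ℕ, 1 ≤ k → k ≤ n ε → IsStochastic (P k ε))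
    (hPt : IsStochastic Pt)
    (hirr : ∃ N : ℕ, ∀ x y, 0 < (Pt ^ N) x y)
    (π : S → ℝ) (hπ0 : ∀ x, 0 ≤ π x) (hπ1 : ∑ x, π x = 1) (hπP : π ᵥ* Pt = π)
    (happrox : ∃ c > (0:ℝ), ∃ ε₁ > (0:ℝ), ∀ ε : ℝ, 0 < ε → ε < ε₁ →
      ∀ k : ℕ, k ≤ mcut n a ε →
        matNorm (P (n ε - k) ε - (Pt - (ε * k) • Pt1)) ≤ c * ε ^ 2 * (mcut n a ε : ℝ) ^ 2)
    (E Z : Matrix S S ℝ) (hE : E = Matrix.of fun _ y => π y) (hZ : Z = (1 - Pt + E)⁻¹) :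
    ∃ c > (0:ℝ), ∃ ε₂ > (0:ℝ), ∀ ε : ℝ, 0 < ε → ε < ε₂ →
      ‖prodP (fun k => P k ε) (n ε) - (E - ε • (E * Pt1 * Z^2 * Pt))‖
          ≤ c * ε ^ 2 * (mcut n a ε : ℝ) ^ 3 := by
  haveI : NormOneClass (Matrix S S ℝ) := Matrix.linfty_opNormOneClass
  obtain ⟨ρ, h0, h1, hA⟩ := ergodic Pt hPt hirr π hπ0 hπ1 hπP
  rw [← hE] at hA
  have hZ1 : Z * (1 - (Pt - E)) = 1 := by
    rw [hZ, sub_add]; exact inv_spec _ ρ h0 h1 hA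
  have hEs : IsStochastic E := by rw [hE]; exact ⟨fun x y => hπ0 y, fun x => hπ1⟩
  have hSE : ∀ Q : Matrix S S ℝ, IsStochastic Q → Q * E = E := fun Q hQ => by
    rw [hE]; exact hQ.mulE π
  have hET : E * Pt = E := by rw [hE]; exact E_mul π hπP
  obtain ⟨c, hc, ε₁, hε₁, happ⟩ := happrox
  obtain ⟨ε₃, hε₃, hm⟩ := mcut_asymp n a hn ha ρ h0 h1
  set K := 4/(1-ρ) with hK
  have hK0 : 0 ≤ K := div_nonneg (by norm_num) (by linarith)
  by_cases hT1 : Pt1 * E = 0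
  · set c1 := ‖Pt1‖ + c + 2 with hc1
    have hP1 : 0 ≤ ‖Pt1‖ := norm_nonneg _
    have hc10 : 0 < c1 := by positivity
    refine ⟨8*K^2*c1^2 + 32*c1/ρ + 8 + 4*K*c1^2 + K*c + ‖Pt1‖*‖Z‖^2*8, by positivity,
      min (min ε₀ ε₁) (min ε₃ 1), by positivity, fun ε hε hlt => ?_⟩
    obtain ⟨⟨hl0, hl1⟩, hl3, hl4⟩ : (ε < ε₀ ∧ ε < ε₁) ∧ ε < ε₃ ∧ ε < 1 := by
      simpa only [lt_min_iff] using hlt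
    obtain ⟨hm1, hm2, hmρ⟩ := hm ε hε hl3
    have happ := happ ε hε hl1
    have hst := hstoch ε hε hl0
    set m := mcut n a ε with hmdef
    clear_value m
    have hM : (1:ℝ) ≤ m := by exact_mod_cast hm1
    have hQs : ∀ k ≤ m, IsStochastic (P (n ε - k) ε) := fun k hk => hst _ (by omega) (by omega)
    rw [prodP_split (fun k => P k ε) (n ε) m (by omega)]
    have hG : IsStochastic (prodP (fun k => P k ε) (n ε - m)) := prodP_stoch _ (n ε) hst _ (by omega)
    have key := core Pt E Pt1 Z ρ h0 h1 (hSE _ hPt) hET (hSE _ hEs) hEs.norm_le hA hZ1 hT1 m hm1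
      (fun k => P (n ε - k) ε) (backProd (fun i => P (n ε - i) ε))
      (prodP (fun k => P k ε) (n ε - m)) ε (c1 * (ε * m)) (c * ε^2 * (m:ℝ)^2) hε.le (by positivity)
      (by positivity) hG.norm_le (hSE _ hG) (fun k hk => (hQs k hk.le).norm_le)
      (fun k hk => hSE _ (hQs k hk.le))
      (fun k hk => by rw [norm_eq_matNorm]; exact happ k hk.le)
      (fun k hk => by
        have hem : 0 < ε * m := by positivity
        rcases le_total (ε * m) 1 with hle | hle
        · have e1 : P (n ε - k) ε - Pt
            = (P (n ε - k) ε - (Pt - (ε * k) • Pt1)) - (ε * k) • Pt1 := by abel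
          have hkm : (k:ℝ) ≤ m := by exact_mod_cast hk.le
          have h2 := happ k hk.le
          rw [← norm_eq_matNorm] at h2
          have h3 : ‖(ε * k) • Pt1‖ ≤ (ε * m) * ‖Pt1‖ := by
            rw [norm_smul, Real.norm_of_nonneg (by positivity)]
            gcongr
          rw [e1]
          refine (norm_sub_le _ _).trans ?_
          have h4 : c * ε^2 * (m:ℝ)^2 ≤ c * (ε * m) := by
            have : c * ε^2 * (m:ℝ)^2 = c * (ε * m) * (ε * m) := by ring
            rw [this]
            exact mul_le_of_le_one_right (by positivity) hle
          rw [hc1]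
          linarith
        · have h2 := norm_sub_le (P (n ε - k) ε) Pt
          have h3 := (hQs k hk.le).norm_le
          have h4 := hPt.norm_le
          have : 0 ≤ ‖Pt1‖ * (ε * m) := by positivity
          have : 0 ≤ c * (ε * m) := by positivity
          rw [hc1]
          linarith)
      rfl (fun k hk => rfl)
    refine key.trans ?_
    have hρm1 : ρ^(m-1) ≤ ε^2/ρ := by
      rw [le_div_iff₀ h0, ← pow_succ, Nat.sub_add_cancel hm1]; exact hmρ
    have hε2 : ε^2 * (m:ℝ)^2 ≤ ε^2 * (m:ℝ)^3 :=
      mul_le_mul_of_nonneg_left (pow_le_pow_right₀ hM (by norm_num)) (by positivity)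
    have t1 : 8 * K^2 * (c1 * (ε * m))^2 ≤ 8*K^2*c1^2 * (ε^2 * (m:ℝ)^3) := by
      calc _ = 8*K^2*c1^2 * (ε^2 * (m:ℝ)^2) := by ring
        _ ≤ _ := mul_le_mul_of_nonneg_left hε2 (by positivity)
    have t2 : 32 * m * (c1 * (ε * m)) * ρ^(m-1) ≤ 32*c1/ρ * (ε^2 * (m:ℝ)^3) := by
      calc _ ≤ 32 * m * (c1 * (ε * m)) * (ε^2/ρ) := mul_le_mul_of_nonneg_left hρm1 (by positivity)
        _ = 32*c1/ρ * (ε^2 * (m:ℝ)^2) * ε := by ring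
        _ ≤ 32*c1/ρ * (ε^2 * (m:ℝ)^2) := mul_le_of_le_one_right (by positivity) hl4.le
        _ ≤ _ := mul_le_mul_of_nonneg_left hε2 (by positivity)
    have t3 : 8 * ρ^m ≤ 8 * (ε^2 * (m:ℝ)^3) := by
      have : ε^2 ≤ ε^2 * (m:ℝ)^3 := le_mul_of_one_le_right (by positivity) (one_le_pow₀ hM)
      linarith
    have t4 : 4 * K * m * (c1 * (ε * m))^2 = 4*K*c1^2 * (ε^2 * (m:ℝ)^3) := by ring
    have t5 : K * (c * ε^2 * (m:ℝ)^2) ≤ K*c * (ε^2 * (m:ℝ)^3) := by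
      calc _ = K*c * (ε^2 * (m:ℝ)^2) := by ring
        _ ≤ _ := mul_le_mul_of_nonneg_left hε2 (by positivity)
    have t6 : ε * (‖Pt1‖ * ‖Z‖^2 * (2 * m * (4 * ρ^m))) ≤ ‖Pt1‖*‖Z‖^2*8 * (ε^2 * (m:ℝ)^3) := by
      calc _ = (‖Pt1‖ * ‖Z‖^2 * 8 * m * ρ^m) * ε := by ring
        _ ≤ ‖Pt1‖ * ‖Z‖^2 * 8 * m * ρ^m := mul_le_of_le_one_right (by positivity) hl4.le
        _ ≤ ‖Pt1‖ * ‖Z‖^2 * 8 * m * ε^2 := mul_le_mul_of_nonneg_left hmρ (by positivity)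
        _ = ‖Pt1‖ * ‖Z‖^2 * 8 * (ε^2 * (m:ℝ)^1) := by ring
        _ ≤ _ := by
          refine mul_le_mul_of_nonneg_left ?_ (by positivity)
          exact mul_le_mul_of_nonneg_left (pow_le_pow_right₀ hM (by norm_num)) (by positivity)
    linarith
  · have hpos : 0 < ‖Pt1 * E‖ := norm_pos_iff.2 hT1
    set M0 := 2 + ‖E * Pt1 * Z^2 * Pt‖ with hM0
    have hM00 : 0 < M0 := by positivity
    set η := ‖Pt1 * E‖ / c with hη
    have hη0 : 0 < η := by positivity
    refine ⟨M0 / η^2, by positivity,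
      min (min ε₀ ε₁) (min ε₃ 1), by positivity, fun ε hε hlt => ?_⟩
    obtain ⟨⟨hl0, hl1⟩, hl3, hl4⟩ : (ε < ε₀ ∧ ε < ε₁) ∧ ε < ε₃ ∧ ε < 1 := by
      simpa only [lt_min_iff] using hlt
    obtain ⟨hm1, hm2, hmρ⟩ := hm ε hε hl3
    have happ := happ ε hε hl1
    have hst := hstoch ε hε hl0
    set m := mcut n a ε with hmdef
    clear_value m
    have hM : (1:ℝ) ≤ m := by exact_mod_cast hm1
    have hem : 0 < ε * m := by positivity
    have hηm : η ≤ ε * m := by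
      have h2 := happ m le_rfl
      rw [← norm_eq_matNorm] at h2
      have e1 : (P (n ε - m) ε - (Pt - (ε * m) • Pt1)) * E = (ε * m) • (Pt1 * E) := by
        rw [sub_mul, sub_mul, hSE _ hPt, hSE _ (hst _ (by omega) (by omega)), smul_mul_assoc]
        abel
      have h3 : ‖(ε * m) • (Pt1 * E)‖ ≤ c * ε^2 * (m:ℝ)^2 := by
        rw [← e1]
        refine (norm_mul_le _ _).trans ((mul_le_of_le_one_right (norm_nonneg _) hEs.norm_le).trans h2)
      rw [norm_smul, Real.norm_of_nonneg hem.le] at h3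
      rw [hη, div_le_iff₀ hc]
      have h4 : (ε * m) * ‖Pt1 * E‖ ≤ (ε * m) * (ε * m * c) := by linarith
      exact le_of_mul_le_mul_left h4 hem
    have hb : ‖prodP (fun k => P k ε) (n ε) - (E - ε • (E * Pt1 * Z^2 * Pt))‖ ≤ M0 := by
      have h2 := (prodP_stoch _ (n ε) hst _ le_rfl).norm_le
      have h3 := hEs.norm_le
      have h4 := norm_sub_le (prodP (fun k => P k ε) (n ε)) (E - ε • (E * Pt1 * Z^2 * Pt))
      have h5 := norm_sub_le E (ε • (E * Pt1 * Z^2 * Pt))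
      rw [norm_smul, Real.norm_of_nonneg hε.le] at h5
      have h6 : ε * ‖E * Pt1 * Z^2 * Pt‖ ≤ ‖E * Pt1 * Z^2 * Pt‖ :=
        mul_le_of_le_one_left (norm_nonneg _) hl4.le
      rw [hM0]
      linarith
    refine hb.trans ?_
    calc M0 = M0/η^2 * η^2 := by field_simp
      _ ≤ M0/η^2 * (ε * m)^2 := by gcongr
      _ = M0/η^2 * ε^2 * (m:ℝ)^2 := by ring
      _ ≤ _ := mul_le_mul_of_nonneg_left (pow_le_pow_right₀ hM (by norm_num)) (by positivity)

theorem final_bound [Nonempty S] (Q E Z Pt Pt1 : Matrix S S ℝ) (π μ r : S → ℝ)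
    (hμ0 : ∀ x, 0 ≤ μ x) (hμ1 : ∑ x, μ x = 1)
    (hE : E = Matrix.of fun _ y => π y) (ε b : ℝ)
    (h : ‖Q - (E - ε • (E * Pt1 * Z^2 * Pt))‖ ≤ b) :
    |μ ⬝ᵥ (Q *ᵥ r) - (π ⬝ᵥ r - ε * (π ⬝ᵥ ((Pt1 * Z^2 * Pt) *ᵥ r)))| ≤ b * ‖r‖ := by
  have h1 := dot_bound (Q - (E - ε • (E * Pt1 * Z^2 * Pt))) μ r hμ0 hμ1
  have e1 : μ ⬝ᵥ (E *ᵥ r) = π ⬝ᵥ r := by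
    have := dot_E π μ r hμ1 1
    rwa [mul_one, Matrix.one_mulVec, ← hE] at this
  have e2 : μ ⬝ᵥ ((E * Pt1 * Z^2 * Pt) *ᵥ r) = π ⬝ᵥ ((Pt1 * Z^2 * Pt) *ᵥ r) := by
    rw [← dot_E π μ r hμ1, ← hE, mul_assoc E, mul_assoc E]
  rw [Matrix.sub_mulVec, Matrix.sub_mulVec, Matrix.smul_mulVec, dotProduct_sub, dotProduct_sub,
    dotProduct_smul, e1, e2, smul_eq_mul] at h1
  exact h1.trans (mul_le_mul_of_nonneg_right h (norm_nonneg _))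

end Mat

/-- Theorem 5: first-order approximation of μ P₁(ε)⋯P_{n(ε)}(ε) r for long horizons,
expanding around the final transition matrix P̃, with error O(ε² m(ε)³) as ε ↓ 0. -/
theorem transient_expectation_terminal_expansion
    {S : Type*} [Fintype S] [Nonempty S] [DecidableEq S]
    (ε₀ : ℝ) (hε₀ : 0 < ε₀) (n : ℝ → ℕ) (a : ℝ → ℝ)
    (hn : Tendsto (fun ε => (n ε : ℝ) / Real.log (1/ε)) (𝓝[>] (0:ℝ)) atTop)
    (ha0 : ∀ ε : ℝ, 0 < ε → ε < ε₀ → 0 < a ε)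
    (ha : Tendsto a (𝓝[>] (0:ℝ)) atTop)
    (P : ℕ → ℝ → Matrix S S ℝ) (Pt Pt1 : Matrix S S ℝ)
    (hstoch : ∀ ε : ℝ, 0 < ε → ε < ε₀ → ∀ k : ℕ, 1 ≤ k → k ≤ n ε → IsStochastic (P k ε))
    (hPt : IsStochastic Pt)
    (hirr : ∃ N : ℕ, ∀ x y, 0 < (Pt ^ N) x y)
    (π : S → ℝ) (hπ0 : ∀ x, 0 ≤ π x) (hπ1 : ∑ x, π x = 1) (hπP : π ᵥ* Pt = π)
    (happrox : ∃ c > (0:ℝ), ∃ ε₁ > (0:ℝ), ∀ ε : ℝ, 0 < ε → ε < ε₁ →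
      ∀ k : ℕ, k ≤ mcut n a ε →
        matNorm (P (n ε - k) ε - (Pt - (ε * k) • Pt1)) ≤ c * ε ^ 2 * (mcut n a ε : ℝ) ^ 2) :
    ∀ μ r : S → ℝ, (∀ x, 0 ≤ μ x) → (∑ x, μ x = 1) →
      ∃ c > (0:ℝ), ∃ ε₂ > (0:ℝ), ∀ ε : ℝ, 0 < ε → ε < ε₂ →
        |μ ⬝ᵥ (prodP (fun k => P k ε) (n ε) *ᵥ r) -
            (π ⬝ᵥ r -
              ε * (π ⬝ᵥ ((Pt1 * ((1 - Pt + Matrix.of fun _ y => π y)⁻¹) ^ 2 * Pt) *ᵥ r)))|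
          ≤ c * ε ^ 2 * (mcut n a ε : ℝ) ^ 3 := by
  intro μ r hμ0 hμ1
  obtain ⟨c, hc, ε₂, hε₂, h⟩ := norm_expansion ε₀ hε₀ n a hn ha P Pt Pt1 hstoch hPt hirr π hπ0 hπ1 hπP
    happrox _ _ rfl rfl
  refine ⟨c * (‖r‖ + 1), by positivity, ε₂, hε₂, fun ε h1 h2 => ?_⟩
  refine (final_bound _ _ _ Pt Pt1 π μ r hμ0 hμ1 rfl ε _ (h ε h1 h2)).trans ?_
  have h3 : 0 ≤ c * ε ^ 2 * (mcut n a ε : ℝ) ^ 3 := by positivity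
  nlinarith
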